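/- Let F = (f_1,…,f_t) be in ℤ[x,y] with t ≥ 2, generating a zero-dimensional ideal I in ℚ[x,y], with all f_i of total degree at most d ≥ 1 and all integer coefficients of absolute value at most e^h. Let G = (g_0,…,g_s) be the reduced minimal lexicographic Gröbner basis of I (for x ≺ y). Then there exists a nonzero integer β such that: (a) β·g_j ∈ ℤ[x,y] for all j; (b) |β| ≤ exp(C(t,d,Δ_3(d),h)) and every coefficient of every β·g_j has absolute value at most exp(C(t,d,Δ_3(d),h)); and (c) for every prime p not dividing β, the images of g_0,…,g_s in F_p[x,y] (well defined since all denominators divide β) form the reduced minimal lexicographic Gröbner basis of the ideal generated by f_1 mod p, …, f_t mod p in F_p[x,y]. -/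

import Mathlib

noncomputable section

open Polynomial

/-- Bivariate polynomials `k[x][y]`: the inner `X` is `x`, the outer `X` is `y`. -/
abbrev Biv (k : Type*) [CommRing k] : Type _ := Polynomial (Polynomial k)

variable {k : Type*} [CommRing k]

/-- The leading monomial of `f`, as the pair (y-exponent, x-exponent), for the
lexicographic order induced by `x ≺ y`. -/
def lmon (f : Biv k) : ℕ × ℕ := (f.natDegree, f.leadingCoeff.natDegree)

/-- Divisibility of monomials: `x^{p.2} y^{p.1}` divides `x^{q.2} y^{q.1}`. -/
def monDvd (p q : ℕ × ℕ) : Prop := p.1 ≤ q.1 ∧ p.2 ≤ q.2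

/-- Lexicographic comparison of monomials, `y`-exponent first. -/
def monLt (p q : ℕ × ℕ) : Prop := p.1 < q.1 ∨ (p.1 = q.1 ∧ p.2 < q.2)

/-- The monomial `x^{m.2} y^{m.1}` occurs in `f` (has a nonzero coefficient). -/
def occursIn (f : Biv k) (m : ℕ × ℕ) : Prop := (f.coeff m.1).coeff m.2 ≠ 0

/-- `G` is a Gröbner basis of `I` for the lexicographic order with `x ≺ y`:
its elements are nonzero elements of `I`, and the leading monomial of any nonzero
element of `I` is divisible by the leading monomial of some element of `G`. -/
def IsGB (G : List (Biv k)) (I : Ideal (Biv k)) : Prop :=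
  (∀ g ∈ G, g ≠ 0 ∧ g ∈ I) ∧
  ∀ f ∈ I, f ≠ 0 → ∃ g ∈ G, monDvd (lmon g) (lmon f)

/-- `f` is monic w.r.t. lex `x ≺ y`: the coefficient of its leading monomial is `1`. -/
def lexMonic (f : Biv k) : Prop := f.leadingCoeff.Monic

/-- `g 0, …, g s` is the reduced minimal lexicographic Gröbner basis of `I`,
listed in decreasing order of leading monomials. -/
def IsReducedGB {s : ℕ} (g : Fin (s + 1) → Biv k) (I : Ideal (Biv k)) : Prop :=
  IsGB (List.ofFn g) I ∧
  (∀ j, lexMonic (g j)) ∧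
  (∀ j l, j ≠ l → ∀ m : ℕ × ℕ, occursIn (g j) m → ¬ monDvd (lmon (g l)) m) ∧
  (∀ j l : Fin (s + 1), j < l → monLt (lmon (g l)) (lmon (g j)))

/-- Every monomial of `f` of `y`-degree `< i` is reduced w.r.t. the family `g`. -/
def reducedBelow {s : ℕ} (g : Fin (s + 1) → Biv k) (i : ℕ) (f : Biv k) : Prop :=
  ∀ m : ℕ × ℕ, m.1 < i → occursIn f m → ∀ j, ¬ monDvd (lmon (g j)) m

/-- `A` is the detaching sequence associated to the reduced Gröbner basis `g` of `I`:
`A i = 0` for `i < n_s`, `A (n_j) = g j`, and otherwise `A i` is obtained from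
`y * A (i-1)` by reducing the terms of `y`-degree `< i` modulo `g`
(so `A i - y * A (i-1)` lies in `I` and has `y`-degree `< i`, and the part of `A i`
of `y`-degree `< i` is reduced w.r.t. `g`). -/
def IsDetachingSeq {s : ℕ} (g : Fin (s + 1) → Biv k) (I : Ideal (Biv k))
    (A : ℕ → Biv k) : Prop :=
  (∀ i, i < (g (Fin.last s)).natDegree → A i = 0) ∧
  (∀ j, A ((g j).natDegree) = g j) ∧
  (∀ i, (g (Fin.last s)).natDegree ≤ i → (∀ j, (g j).natDegree ≠ i) →
    (A i - Polynomial.X * A (i - 1)) ∈ I ∧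
    (A i - Polynomial.X * A (i - 1)).degree < (i : WithBot ℕ) ∧
    reducedBelow g i (A i))

/-- The total degree of a bivariate polynomial `f ∈ k[x][y]`. -/
def totDeg {k : Type*} [CommRing k] (f : Biv k) : ℕ :=
  f.support.sup fun j => j + (f.coeff j).natDegree

/-- The height bound `B(n,d,h) = (N+1)h + N log N + log(n(d+1))` with
`N = n²d − nd + n`, for Hermite normal forms of `n × n` matrices of degree `≤ d`
and height `≤ h` over `ℤ[x]`. -/
def Bfun (n d : ℕ) (h : ℝ) : ℝ :=
  (((n ^ 2 * d - n * d + n : ℕ) : ℝ) + 1) * h +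
    ((n ^ 2 * d - n * d + n : ℕ) : ℝ) * Real.log ((n ^ 2 * d - n * d + n : ℕ) : ℝ) +
    Real.log ((n : ℝ) * ((d : ℝ) + 1))

/-- The height bound `C(t,d,D,h) = B(tD,d,h) + h + log 2`. -/
def Cfun (t d D : ℕ) (h : ℝ) : ℝ := Bfun (t * D) d h + h + Real.log 2

/-- `Δ₁(d_y) = d_y`. -/
def Delta1 (dy : ℕ) : ℕ := dy

/-- `Δ₂(d) = 2d′² + d′` with `d′ = max(d,3)`. -/
def Delta2 (d : ℕ) : ℕ := 2 * max d 3 ^ 2 + max d 3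

/-- `Δ₃(d) = 16d′⁴ + 2d′² + 2d′` with `d′ = max(d,3)`. -/
def Delta3 (d : ℕ) : ℕ := 16 * max d 3 ^ 4 + 2 * max d 3 ^ 2 + 2 * max d 3

/-- The inclusion `ℤ[x,y] → ℚ[x,y]`. -/
def toQ : Biv ℤ →+* Biv ℚ :=
  Polynomial.mapRingHom (Polynomial.mapRingHom (Int.castRingHom ℚ))

/-- The reduction `ℤ[x,y] → F_p[x,y]`. -/
def toP (p : ℕ) : Biv ℤ →+* Biv (ZMod p) :=
  Polynomial.mapRingHom (Polynomial.mapRingHom (Int.castRingHom (ZMod p)))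

def cf {k : Type*} [CommRing k] (f : Biv k) (m : ℕ × ℕ) : k := (f.coeff m.1).coeff m.2

section cfsec

theorem biv_ext {f g : Biv k} (h : ∀ m, cf f m = cf g m) : f = g := by
  ext a b
  exact h (a, b)

theorem cf_zero (m : ℕ × ℕ) : cf (0 : Biv k) m = 0 := by simp [cf]

theorem cf_add (f g : Biv k) (m : ℕ × ℕ) : cf (f + g) m = cf f m + cf g m := by simp [cf]

theorem cf_sub (f g : Biv k) (m : ℕ × ℕ) : cf (f - g) m = cf f m - cf g m := by simp [cf]

theorem cf_sum {ι : Type*} (s : Finset ι) (f : ι → Biv k) (m : ℕ × ℕ) :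
    cf (∑ i ∈ s, f i) m = ∑ i ∈ s, cf (f i) m := by simp [cf]

theorem cf_CC (c : k) (f : Biv k) (m : ℕ × ℕ) : cf (C (C c) * f) m = c * cf f m := by
  simp [cf, coeff_C_mul]

theorem cf_mono (f : Biv k) (a b : ℕ) (m : ℕ × ℕ) :
    cf (X ^ a * (C (X ^ b) * f)) m =
      if a ≤ m.1 ∧ b ≤ m.2 then cf f (m.1 - a, m.2 - b) else 0 := by
  simp only [cf, coeff_X_pow_mul']
  by_cases h1 : a ≤ m.1 <;> by_cases h2 : b ≤ m.2 <;> simp [h1, h2, coeff_C_mul, coeff_X_pow_mul', -map_pow]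

theorem cf_toQ (f : Biv ℤ) (m : ℕ × ℕ) : cf (toQ f) m = ((cf f m : ℤ) : ℚ) := by simp [cf, toQ]

theorem cf_toP (p : ℕ) (f : Biv ℤ) (m : ℕ × ℕ) : cf (toP p f) m = ((cf f m : ℤ) : ZMod p) := by
  simp [cf, toP]

theorem toQ_inj : Function.Injective toQ := by
  intro f g h
  apply biv_ext
  intro m
  have := congrArg (fun x => cf x m) h
  simpa [cf_toQ] using this

theorem cf_lmon_ne {f : Biv k} (hf : f ≠ 0) : cf f (lmon f) ≠ 0 := by
  simp [cf, lmon, hf]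

theorem cf_above {f : Biv k} {m : ℕ × ℕ} (h : monLt (lmon f) m) : cf f m = 0 := by
  rcases h with h | ⟨h1, h2⟩
  · simp only [lmon] at h
    simp [cf, coeff_eq_zero_of_natDegree_lt h]
  · simp only [lmon] at h1 h2
    rw [cf, ← h1]
    exact coeff_eq_zero_of_natDegree_lt h2

theorem monLt_trichotomy (p q : ℕ × ℕ) : monLt p q ∨ p = q ∨ monLt q p := by
  rcases p with ⟨a, b⟩
  rcases q with ⟨c, d⟩
  simp only [monLt, Prod.mk.injEq]
  omega

theorem lmon_eq {f : Biv k} {m : ℕ × ℕ} (h1 : cf f m ≠ 0) (h2 : ∀ m', monLt m m' → cf f m' = 0) :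
    lmon f = m := by
  have hf : f ≠ 0 := by
    rintro rfl
    exact h1 (cf_zero m)
  rcases monLt_trichotomy (lmon f) m with h | h | h
  · exact absurd (cf_above h) h1
  · exact h
  · exact absurd (h2 _ h) (cf_lmon_ne hf)

theorem lexMonic_iff (f : Biv k) : lexMonic f ↔ cf f (lmon f) = 1 := Iff.rfl

theorem monLt_wf : WellFounded monLt := by
  have h : monLt = Prod.Lex (· < ·) (· < ·) := by
    funext p q
    simp [monLt, Prod.lex_def]
  rw [h]
  exact WellFounded.prod_lex wellFounded_lt wellFounded_lt

end cfsec

/-- Reduction step: elements of the contracted ideal keep divisible leading monomials mod `p`. -/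
theorem transfer_aux {s : ℕ} (I : Ideal (Biv ℚ)) (g : Fin (s + 1) → Biv ℚ)
    (hg : IsReducedGB g I) (β : ℤ) (gz : Fin (s + 1) → Biv ℤ)
    (hgz : ∀ j, toQ (gz j) = C (C (β : ℚ)) * g j) (p : ℕ) [Fact p.Prime] (hp : ¬ ((p : ℤ) ∣ β)) :
    ∀ m : ℕ × ℕ, ∀ F : Biv ℤ, toQ F ∈ I → lmon F = m → toP p F ≠ 0 →
      ∃ j, monDvd (lmon (g j)) (lmon (toP p F)) := by
  intro m
  induction m using monLt_wf.induction with
  | _ m ih =>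
  intro F hF hm h0
  have hF0 : F ≠ 0 := by
    rintro rfl
    exact h0 (map_zero _)
  have hQ0 : toQ F ≠ 0 := by
    intro h
    exact hF0 (toQ_inj (by rw [h, map_zero]))
  have hlQ : lmon (toQ F) = m := by
    apply lmon_eq
    · rw [cf_toQ, ← hm]
      exact_mod_cast cf_lmon_ne hF0
    · intro m' h'
      rw [cf_toQ, cf_above (by rw [hm]; exact h')]
      simp
  obtain ⟨g0, hg0, hdiv⟩ := hg.1.2 _ hF hQ0
  rw [List.mem_ofFn] at hg0
  obtain ⟨j, rfl⟩ := hg0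
  rw [hlQ] at hdiv
  have hgcf : ∀ m', ((cf (gz j) m' : ℤ) : ℚ) = β * cf (g j) m' := by
    intro m'
    rw [← cf_toQ, hgz, cf_CC]
  have hglead : cf (gz j) (lmon (g j)) = β := by
    have h1 := hgcf (lmon (g j))
    rw [(lexMonic_iff _).1 (hg.2.1 j), mul_one] at h1
    exact_mod_cast h1
  have hgabove : ∀ m', monLt (lmon (g j)) m' → cf (gz j) m' = 0 := by
    intro m' h'
    have h1 := hgcf m'
    rw [cf_above h', mul_zero] at h1
    exact_mod_cast h1
  by_cases hc : (p : ℤ) ∣ cf F m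
  · set F' : Biv ℤ := C (C β) * F - C (C (cf F m)) *
      (X ^ (m.1 - (lmon (g j)).1) * (C (X ^ (m.2 - (lmon (g j)).2)) * gz j)) with hF'
    have hP : toP p F' = C (C (β : ZMod p)) * toP p F := by
      apply biv_ext
      intro m'
      have hz : ((cf F m : ℤ) : ZMod p) = 0 := (ZMod.intCast_zmod_eq_zero_iff_dvd _ _).2 hc
      rw [cf_toP, hF', cf_sub, cf_CC, cf_CC, cf_CC, cf_toP]
      push_cast
      rw [hz]
      ring
    have hβp : (β : ZMod p) ≠ 0 := fun h => hp ((ZMod.intCast_zmod_eq_zero_iff_dvd _ _).1 h)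
    have hl : lmon (toP p F') = lmon (toP p F) := by
      apply lmon_eq
      · rw [hP, cf_CC]
        exact mul_ne_zero hβp (cf_lmon_ne h0)
      · intro m' h'
        rw [hP, cf_CC, cf_above h', mul_zero]
    have hP0 : toP p F' ≠ 0 := by
      intro h
      have h2 := cf_lmon_ne h0
      have h3 : cf (toP p F') (lmon (toP p F)) = 0 := by rw [h, cf_zero]
      rw [hP, cf_CC] at h3
      exact (mul_ne_zero hβp h2) h3
    have hF'0 : F' ≠ 0 := by
      intro h
      exact hP0 (by rw [h, map_zero])
    have hIn : toQ F' ∈ I := by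
      have hgI : g j ∈ I := (hg.1.1 (g j) (by rw [List.mem_ofFn]; exact ⟨j, rfl⟩)).2
      rw [hF', map_sub, map_mul, map_mul, map_mul, map_mul, hgz]
      refine I.sub_mem (I.mul_mem_left _ hF) ?_
      exact I.mul_mem_left _ (I.mul_mem_left _ (I.mul_mem_left _ (I.mul_mem_left _ hgI)))
    have hlt : monLt (lmon F') m := by
      rcases monLt_trichotomy (lmon F') m with h | h | h
      · exact h
      · exfalso
        have h2 := cf_lmon_ne hF'0
        apply h2
        rw [h, hF', cf_sub, cf_CC, cf_CC, cf_mono]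
        rw [if_pos ⟨by omega, by omega⟩]
        have : (m.1 - (m.1 - (lmon (g j)).1), m.2 - (m.2 - (lmon (g j)).2)) = lmon (g j) := by
          have := hdiv.1
          have := hdiv.2
          ext <;> simp <;> omega
        rw [this, hglead]
        ring
      · exfalso
        apply cf_lmon_ne hF'0
        generalize lmon F' = q at h
        rw [hF', cf_sub, cf_CC, cf_CC, cf_mono, cf_above (f := F) (by rw [hm]; exact h)]
        split_ifs with h5
        · rw [hgabove]
          · ring
          · have := hdiv.1
            have := hdiv.2
            rcases h with h | h
            · left
              simp only
              omega
            · right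
              simp only
              omega
        · ring
    obtain ⟨l, hl2⟩ := ih _ hlt F' hIn rfl hP0
    exact ⟨l, by rw [← hl]; exact hl2⟩
  · refine ⟨j, ?_⟩
    have : lmon (toP p F) = m := by
      apply lmon_eq
      · rw [cf_toP]
        exact fun h => hc ((ZMod.intCast_zmod_eq_zero_iff_dvd _ _).1 h)
      · intro m' h'
        rw [cf_toP, cf_above (by rw [hm]; exact h')]
        simp
    rw [this]
    exact hdiv

theorem toP_surj (p : ℕ) : Function.Surjective (toP p) := by
  apply Polynomial.map_surjective
  apply Polynomial.map_surjective
  exact ZMod.intCast_surjective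

theorem transfer {t s : ℕ} (f : Fin t → Biv ℤ) (I : Ideal (Biv ℚ))
    (hI : I = Ideal.span (Set.range fun i => toQ (f i)))
    (g : Fin (s + 1) → Biv ℚ)
    (hg : IsReducedGB g I) (β : ℤ) (gz : Fin (s + 1) → Biv ℤ)
    (hgz : ∀ j, toQ (gz j) = C (C (β : ℚ)) * g j)
    (hmem : ∀ j, gz j ∈ Ideal.span (Set.range f)) (p : ℕ) (hpp : p.Prime) (hp : ¬ ((p : ℤ) ∣ β)) :
    IsReducedGB
            (fun j => Polynomial.C (Polynomial.C ((β : ZMod p))⁻¹) * toP p (gz j))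
            (Ideal.span (Set.range fun i => toP p (f i))) := by
  have : Fact p.Prime := ⟨hpp⟩
  have hβp : (β : ZMod p) ≠ 0 := fun h => hp ((ZMod.intCast_zmod_eq_zero_iff_dvd _ _).1 h)
  have hspan : Ideal.span (Set.range fun i => toP p (f i)) =
      Ideal.map (toP p) (Ideal.span (Set.range f)) := by
    rw [Ideal.map_span, ← Set.range_comp]
    rfl
  have hgcf : ∀ j m', ((cf (gz j) m' : ℤ) : ℚ) = β * cf (g j) m' := by
    intro j m'
    rw [← cf_toQ, hgz, cf_CC]
  have hocc : ∀ j m', cf (g j) m' = 0 →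
      cf (C (C ((β : ZMod p))⁻¹) * toP p (gz j)) m' = 0 := by
    intro j m' h0
    have h1 := hgcf j m'
    rw [h0, mul_zero] at h1
    have h2 : cf (gz j) m' = 0 := by exact_mod_cast h1
    rw [cf_CC, cf_toP, h2]
    simp
  have hone : ∀ j, cf (C (C ((β : ZMod p))⁻¹) * toP p (gz j)) (lmon (g j)) = 1 := by
    intro j
    have h1 := hgcf j (lmon (g j))
    rw [(lexMonic_iff _).1 (hg.2.1 j), mul_one] at h1
    have h2 : cf (gz j) (lmon (g j)) = β := by exact_mod_cast h1
    rw [cf_CC, cf_toP, h2]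
    exact inv_mul_cancel₀ hβp
  have hlm : ∀ j, lmon (C (C ((β : ZMod p))⁻¹) * toP p (gz j)) = lmon (g j) := by
    intro j
    apply lmon_eq
    · rw [hone]
      exact one_ne_zero
    · intro m' h'
      exact hocc j m' (cf_above h')
  refine ⟨⟨?_, ?_⟩, ?_, ?_, ?_⟩
  · intro q hq
    rw [List.mem_ofFn] at hq
    obtain ⟨j, rfl⟩ := hq
    constructor
    · intro h
      have := hone j
      rw [h, cf_zero] at this
      exact zero_ne_one this
    · rw [hspan]
      exact Ideal.mul_mem_left _ _ (Ideal.mem_map_of_mem _ (hmem j))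
  · intro q hq hq0
    rw [hspan, Ideal.mem_map_iff_of_surjective _ (toP_surj p)] at hq
    obtain ⟨F, hF, rfl⟩ := hq
    have hFI : toQ F ∈ I := by
      have h1 := Ideal.mem_map_of_mem toQ hF
      rw [Ideal.map_span, ← Set.range_comp] at h1
      rw [hI]
      exact h1
    obtain ⟨j, hj⟩ := transfer_aux I g hg β gz hgz p hp _ F hFI rfl hq0
    refine ⟨C (C ((β : ZMod p))⁻¹) * toP p (gz j), ?_, ?_⟩
    · rw [List.mem_ofFn]
      exact ⟨j, rfl⟩
    · rw [hlm]
      exact hj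
  · intro j
    rw [lexMonic_iff, hlm, hone]
  · intro j l hjl m hm
    rw [hlm]
    apply hg.2.2.1 j l hjl m
    intro h0
    exact hm (hocc j m h0)
  · intro j l hjl
    rw [hlm, hlm]
    exact hg.2.2.2 j l hjl

theorem LA {ι ρ : Type} [Fintype ι] [Fintype ρ] (v : ρ → ι → ℤ) (H : ℝ)
    (hH : ∀ r m, ((|v r m| : ℤ) : ℝ) ≤ H) (Q : Set ι)
    (inj : ∀ c : ρ → ℚ, (∀ m ∈ Q, ∑ r, c r * (v r m : ℚ) = 0) →
      ∀ m, ∑ r, c r * (v r m : ℚ) = 0) :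
    ∃ (n : ℕ) (β : ℤ), n ≤ Fintype.card ι ∧ β ≠ 0 ∧ ((|β| : ℤ) : ℝ) ≤ n.factorial * H ^ n ∧
      ∀ u : ι → ℚ, (∃ c : ρ → ℚ, ∀ m, u m = ∑ r, c r * (v r m : ℚ)) →
        ∀ m0 ∈ Q, u m0 = 1 → (∀ m ∈ Q, m ≠ m0 → u m = 0) →
        ∃ z : ρ → ℤ, (∀ m, ((∑ r, z r * v r m : ℤ) : ℚ) = β * u m) ∧
          ∀ m, ((|∑ r, z r * v r m| : ℤ) : ℝ) ≤ n.factorial * H ^ n := by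
  classical
  let w : ρ → ι → ℚ := fun r m => (v r m : ℚ)
  obtain ⟨κ, a, ha, hspan, hli⟩ := exists_linearIndependent' ℚ w
  have : Finite κ := Finite.of_injective a ha
  have := Fintype.ofFinite κ
  -- columns
  let col : Q → (κ → ℚ) := fun m k => (v (a k) m : ℚ)
  have hcol : Submodule.span ℚ (Set.range col) = ⊤ := by
    by_contra hne
    obtain ⟨φ, hφ0, hφ⟩ := Submodule.exists_le_ker_of_lt_top _ (lt_top_iff_ne_top.2 hne)
    apply hφ0
    let c : κ → ℚ := fun k => φ (Pi.single k 1)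
    have hφc : ∀ x : κ → ℚ, φ x = ∑ k, c k * x k := by
      intro x
      conv_lhs => rw [← Finset.univ_sum_single x]
      rw [map_sum]
      refine Finset.sum_congr rfl fun k _ => ?_
      have : (Pi.single k (x k) : κ → ℚ) = x k • Pi.single k 1 := by
        rw [← Pi.single_smul]; simp
      rw [this, map_smul, smul_eq_mul, mul_comm]
    let c' : ρ → ℚ := fun r => ∑ k, if a k = r then c k else 0
    have hc' : ∀ m, ∑ r, c' r * (v r m : ℚ) = ∑ k, c k * (v (a k) m : ℚ) := by
      intro m
      simp only [c', Finset.sum_mul]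
      rw [Finset.sum_comm]
      refine Finset.sum_congr rfl fun k _ => ?_
      simp [ite_mul]
    have h1 : ∀ m, ∑ k, c k * (v (a k) m : ℚ) = 0 := by
      intro m
      rw [← hc']
      apply inj
      intro m' hm'
      rw [hc']
      have : φ (col ⟨m', hm'⟩) = 0 := hφ (Submodule.subset_span ⟨_, rfl⟩)
      rw [hφc] at this
      exact this
    have h2 := Fintype.linearIndependent_iff.1 hli c (by
      funext m
      simpa [w, Finset.sum_apply] using h1 m)
    apply LinearMap.ext
    intro x
    rw [hφc]
    simp [h2]
  obtain ⟨κ', b, hb, hspan', hli'⟩ := exists_linearIndependent' ℚ col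
  have : Finite κ' := Finite.of_injective b hb
  have := Fintype.ofFinite κ'
  have hB : ⊤ ≤ Submodule.span ℚ (Set.range (col ∘ b)) := by rw [hspan', hcol]
  have hcard : Fintype.card κ' = Fintype.card κ := by
    have h1 := Module.finrank_eq_card_basis (Module.Basis.mk hli' hB)
    rw [Module.finrank_fintype_fun_eq_card] at h1
    exact h1.symm
  let e : κ ≃ κ' := (Fintype.equivOfCardEq hcard).symm
  let P : κ → ι := fun k => (b (e k) : ι)
  have hPinj : Function.Injective P := by
    intro x y h
    exact e.injective (hb (Subtype.ext h))
  have hPQ : ∀ k, P k ∈ Q := fun k => (b (e k)).2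
  let A : Matrix κ κ ℤ := fun k k' => v (a k) (P k')
  let AQ : Matrix κ κ ℚ := A.map (Int.castRingHom ℚ)
  have hAQ : IsUnit AQ := by
    rw [← Matrix.linearIndependent_cols_iff_isUnit]
    have := hli'.comp e e.injective
    exact this
  have hdetQ : (A.det : ℚ) = AQ.det := by
    have := RingHom.map_det (Int.castRingHom ℚ) A
    exact this
  have hdet : A.det ≠ 0 := by
    intro h
    have h1 := (Matrix.isUnit_iff_isUnit_det _).1 hAQ
    rw [← hdetQ, h] at h1
    simp at h1
  have hbound : ∀ M : Matrix κ κ ℤ, (∀ i j, ((|M i j| : ℤ) : ℝ) ≤ H) →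
      ((|M.det| : ℤ) : ℝ) ≤ (Fintype.card κ).factorial * H ^ (Fintype.card κ) := by
    intro M hM
    have h1 := Matrix.det_le (A := M.map (Int.castRingHom ℝ)) (abv := AbsoluteValue.abs) (x := H)
      (by intro i j; have := hM i j; push_cast at this; simpa using this)
    have h2 := RingHom.map_det (Int.castRingHom ℝ) M
    rw [show M.map (Int.castRingHom ℝ) = (Int.castRingHom ℝ).mapMatrix M from rfl, ← h2] at h1
    rw [nsmul_eq_mul] at h1
    rw [Int.cast_abs]
    exact h1
  refine ⟨Fintype.card κ, A.det, ?_, hdet, ?_, ?_⟩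
  · exact Fintype.card_le_of_injective P hPinj
  · exact hbound A fun i j => hH _ _
  intro u ⟨c, hc⟩ m0 hm0 hu0 hu
  -- express u in the rows κ
  have humem : u ∈ Submodule.span ℚ (Set.range (w ∘ a)) := by
    rw [hspan]
    have : u = ∑ r, c r • w r := by
      funext m
      simp [hc, w, Finset.sum_apply]
    rw [this]
    exact Submodule.sum_mem _ fun r _ => Submodule.smul_mem _ _ (Submodule.subset_span ⟨r, rfl⟩)
  obtain ⟨l, hl⟩ := (Submodule.mem_span_range_iff_exists_fun ℚ).1 humem
  have hl' : ∀ m, u m = ∑ k, l k * (v (a k) m : ℚ) := by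
    intro m
    rw [← hl]
    simp [w, Finset.sum_apply]
  have hvec : ∀ k', Matrix.vecMul l AQ k' = u (P k') := by
    intro k'
    rw [hl']
    rfl
  have hex : ∃ j, P j = m0 := by
    by_contra hno
    push Not at hno
    have h1 : Matrix.vecMul l AQ = 0 := by
      funext k'
      rw [hvec]
      exact hu _ (hPQ k') (hno k')
    have h2 : l = 0 := by
      have := congrArg (fun x => Matrix.vecMul x AQ⁻¹) h1
      simpa [Matrix.vecMul_vecMul, Matrix.mul_nonsing_inv _ ((Matrix.isUnit_iff_isUnit_det _).1 hAQ)]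
        using this
    rw [hl' m0, h2] at hu0
    simp at hu0
  obtain ⟨j, hj⟩ := hex
  have hvec' : Matrix.vecMul l AQ = Pi.single j 1 := by
    funext k'
    rw [hvec]
    by_cases h : k' = j
    · subst h
      rw [hj, hu0]
      simp
    · rw [hu _ (hPQ k') (by rw [← hj]; exact fun h' => h (hPinj h'))]
      simp [h]
  have hadj : ∀ k, (A.det : ℚ) * l k = (A.adjugate j k : ℚ) := by
    intro k
    have h1 := congrArg (fun x => Matrix.vecMul x AQ.adjugate k) hvec'
    simp only [Matrix.vecMul_vecMul, Matrix.mul_adjugate, Matrix.single_one_vecMul] at h1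
    rw [Matrix.vecMul_smul, Matrix.vecMul_one] at h1
    have h2 : AQ.adjugate = A.adjugate.map (Int.castRingHom ℚ) := by
      have := RingHom.map_adjugate (Int.castRingHom ℚ) A
      exact this.symm
    rw [hdetQ]
    simpa [h2] using h1
  let z : ρ → ℤ := fun r => ∑ k, if a k = r then A.adjugate j k else 0
  have hz : ∀ m, ∑ r, z r * v r m = ∑ k, A.adjugate j k * v (a k) m := by
    intro m
    simp only [z, Finset.sum_mul]
    rw [Finset.sum_comm]
    refine Finset.sum_congr rfl fun k _ => ?_
    simp [ite_mul]
  refine ⟨z, ?_, ?_⟩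
  · intro m
    rw [hz, hl', Finset.mul_sum]
    rw [Int.cast_sum]
    refine Finset.sum_congr rfl fun k _ => ?_
    rw [Int.cast_mul, ← hadj]
    ring
  · intro m
    rw [hz]
    have h1 : ∑ k, A.adjugate j k * v (a k) m = (A.updateCol j (fun k => v (a k) m)).det := by
      rw [← Matrix.cramer_apply, Matrix.cramer_eq_adjugate_mulVec]
      rfl
    rw [h1]
    apply hbound
    intro i k
    rw [Matrix.updateCol_apply]
    split_ifs
    · exact hH _ _
    · exact hH _ _

theorem exists_univ {V : Type*} [AddCommGroup V] [Module ℚ V] [FiniteDimensional ℚ V]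
    (T : ℚ[X] →ₗ[ℚ] V) : ∃ r : ℚ[X], r ≠ 0 ∧ T r = 0 := by
  by_contra h
  push Not at h
  have hinj : Function.Injective T := by
    rw [← LinearMap.ker_eq_bot, LinearMap.ker_eq_bot']
    intro r hr
    by_contra h0
    exact h r h0 hr
  have h1 : FiniteDimensional ℚ ℚ[X] := FiniteDimensional.of_injective T hinj
  exact Polynomial.not_finite h1

theorem exists_r0 (I : Ideal (Biv ℚ)) (hdim : FiniteDimensional ℚ (Biv ℚ ⧸ I)) :
    (∃ r : ℚ[X], r ≠ 0 ∧ (C r : Biv ℚ) ∈ I) ∧ (∃ r : ℚ[X], r ≠ 0 ∧ (r.map C : Biv ℚ) ∈ I) := by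
  constructor
  · obtain ⟨r, h0, hr⟩ := exists_univ ((Ideal.Quotient.mkₐ ℚ I).toLinearMap.comp
      (CAlgHom (R := ℚ) (A := ℚ[X])).toLinearMap)
    exact ⟨r, h0, Ideal.Quotient.eq_zero_iff_mem.1 hr⟩
  · obtain ⟨r, h0, hr⟩ := exists_univ ((Ideal.Quotient.mkₐ ℚ I).toLinearMap.comp
      (mapAlgHom (CAlgHom (R := ℚ) (A := ℚ))).toLinearMap)
    exact ⟨r, h0, Ideal.Quotient.eq_zero_iff_mem.1 hr⟩

theorem unit_of_dvd {q : Biv ℚ} {r s : ℚ[X]} (hr : r ≠ 0) (hs : s ≠ 0)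
    (h1 : q ∣ C r) (h2 : q ∣ s.map C) : IsUnit q := by
  have hq : q.natDegree = 0 := by
    have := natDegree_le_of_dvd h1 (by simpa using hr)
    simpa using this
  rw [eq_C_of_natDegree_eq_zero hq] at h2 ⊢
  rw [C_dvd_iff_dvd_coeff] at h2
  have h3 := h2 s.natDegree
  rw [coeff_map] at h3
  apply IsUnit.map
  apply isUnit_of_dvd_unit h3
  apply IsUnit.map
  simpa using hs

theorem exists_coprime {t : ℕ} (F : Fin t → Biv ℚ)
    (hr : ∃ r : ℚ[X], r ≠ 0 ∧ (C r : Biv ℚ) ∈ Ideal.span (Set.range F))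
    (hs : ∃ r : ℚ[X], r ≠ 0 ∧ (r.map C : Biv ℚ) ∈ Ideal.span (Set.range F)) :
    ∃ a b : Fin t → ℚ, (∑ i, a i • F i) ≠ 0 ∧ IsRelPrime (∑ i, a i • F i) (∑ i, b i • F i) := by
  classical
  obtain ⟨r, hr0, hr⟩ := hr
  obtain ⟨s, hs0, hs⟩ := hs
  have hex : ∃ i, F i ≠ 0 := by
    by_contra h
    push Not at h
    have h2 : Ideal.span (Set.range F) = ⊥ := by
      rw [Ideal.span_eq_bot]
      rintro _ ⟨i, rfl⟩
      exact h i
    rw [h2, Ideal.mem_bot] at hr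
    exact hr0 (by simpa using hr)
  obtain ⟨i0, hi0⟩ := hex
  let T := Fintype.linearCombination ℚ F
  let U : Biv ℚ → Submodule ℚ (Fin t → ℚ) := fun p =>
    Submodule.comap T ((Ideal.span {p}).restrictScalars ℚ)
  have hU : ∀ p c, c ∈ U p ↔ p ∣ ∑ i, c i • F i := by
    intro p c
    simp [U, T, Ideal.mem_span_singleton, Fintype.linearCombination_apply]
  let S : Finset (Submodule ℚ (Fin t → ℚ)) :=
    (UniqueFactorizationMonoid.factors (F i0)).toFinset.image U
  have hS : ⊤ ∉ S := by
    intro h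
    rw [Finset.mem_image] at h
    obtain ⟨p, hp, hpU⟩ := h
    rw [Multiset.mem_toFinset] at hp
    have hirr := UniqueFactorizationMonoid.irreducible_of_factor p hp
    have hall : ∀ i, p ∣ F i := by
      intro i
      have h1 : (Pi.single i 1 : Fin t → ℚ) ∈ U p := by rw [hpU]; trivial
      rw [hU] at h1
      simpa [Pi.single_apply, ite_smul] using h1
    have hle : Ideal.span (Set.range F) ≤ Ideal.span {p} := by
      rw [Ideal.span_le]
      rintro _ ⟨i, rfl⟩
      exact Ideal.mem_span_singleton.2 (hall i)
    exact hirr.not_isUnit (unit_of_dvd hr0 hs0 (Ideal.mem_span_singleton.1 (hle hr))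
      (Ideal.mem_span_singleton.1 (hle hs)))
  have hne := Subspace.biUnion_ne_univ_of_top_notMem hS
  obtain ⟨b, hb⟩ := (Set.ne_univ_iff_exists_notMem _).1 hne
  refine ⟨Pi.single i0 1, b, ?_⟩
  have h1 : ∑ i, (Pi.single i0 1 : Fin t → ℚ) i • F i = F i0 := by
    simp [Pi.single_apply, ite_smul]
  rw [h1]
  refine ⟨hi0, ?_⟩
  apply WfDvdMonoid.isRelPrime_of_no_irreducible_factors
  · exact fun h => hi0 h.1
  intro p hp hp1 hp2
  obtain ⟨q, hq, hpq⟩ := UniqueFactorizationMonoid.exists_mem_factors_of_dvd hi0 hp hp1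
  apply hb
  simp only [Set.mem_iUnion]
  refine ⟨U q, ?_, ?_⟩
  · exact Finset.mem_image.2 ⟨q, Multiset.mem_toFinset.2 hq, rfl⟩
  · exact (hU _ _).2 (hpq.symm.dvd.trans hp2)

theorem cf_smul (c : ℚ) (f : Biv ℚ) (m : ℕ × ℕ) : cf (c • f) m = c * cf f m := by
  simp [cf]

/-- Polynomials with `y`-degree `< Y` and `x`-degree `< X`. -/
def Box (Y Z : ℕ) : Submodule ℚ (Biv ℚ) where
  carrier := {p | ∀ m, cf p m ≠ 0 → m.1 < Y ∧ m.2 < Z}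
  zero_mem' := fun m hm => absurd (cf_zero m) hm
  add_mem' := by
    intro p q hp hq m hm
    rw [cf_add] at hm
    by_cases h : cf p m = 0
    · rw [h, zero_add] at hm
      exact hq m hm
    · exact hp m h
  smul_mem' := by
    intro c p hp m hm
    rw [cf_smul] at hm
    exact hp m (right_ne_zero_of_mul hm)

theorem mem_Box {Y Z : ℕ} {p : Biv ℚ} : p ∈ Box Y Z ↔ ∀ m, cf p m ≠ 0 → m.1 < Y ∧ m.2 < Z :=
  Iff.rfl

theorem Box_mono {Y Z Y' Z' : ℕ} (h1 : Y ≤ Y') (h2 : Z ≤ Z') {p : Biv ℚ} (hp : p ∈ Box Y Z) :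
    p ∈ Box Y' Z' := fun m hm => ⟨(hp m hm).1.trans_le h1, (hp m hm).2.trans_le h2⟩

theorem Box_mul {Y Z Y' Z' : ℕ} {p q : Biv ℚ} (hp : p ∈ Box Y Z) (hq : q ∈ Box (Y' + 1) (Z' + 1)) :
    p * q ∈ Box (Y + Y') (Z + Z') := by
  intro m hm
  rw [cf, coeff_mul, finsetSum_coeff] at hm
  obtain ⟨x, hx, hx0⟩ := Finset.exists_ne_zero_of_sum_ne_zero hm
  rw [coeff_mul] at hx0
  obtain ⟨y, hy, hy0⟩ := Finset.exists_ne_zero_of_sum_ne_zero hx0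
  rw [Finset.HasAntidiagonal.mem_antidiagonal] at hx hy
  have h1 := hp (x.1, y.1) (left_ne_zero_of_mul hy0)
  have h2 := hq (x.2, y.2) (right_ne_zero_of_mul hy0)
  simp only at h1 h2
  omega

/-- Polynomial with prescribed coefficients. -/
def mkP (Y Z : ℕ) : (Fin Y × Fin Z → ℚ) →ₗ[ℚ] Biv ℚ :=
  Fintype.linearCombination ℚ (fun m : Fin Y × Fin Z => (monomial m.1.1 (monomial m.2.1 1) : Biv ℚ))

theorem cf_monomial (a b : ℕ) (c : ℚ) (m : ℕ × ℕ) :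
    cf (monomial a (monomial b c) : Biv ℚ) m = if m = (a, b) then c else 0 := by
  rcases m with ⟨i, j⟩
  simp only [cf, coeff_monomial, Prod.mk.injEq]
  by_cases h1 : a = i <;> by_cases h2 : b = j
  · simp [h1, h2]
  · simp [h1, h2, coeff_monomial, Ne.symm h2]
  · simp [h1, Ne.symm h1]
  · simp [h1, Ne.symm h1]

theorem cf_mkP_in {Y Z : ℕ} (c : Fin Y × Fin Z → ℚ) (m : Fin Y × Fin Z) :
    cf (mkP Y Z c) (m.1.1, m.2.1) = c m := by
  rw [mkP, Fintype.linearCombination_apply, cf_sum]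
  rw [Finset.sum_eq_single m]
  · rw [cf_smul, cf_monomial, if_pos rfl, mul_one]
  · intro b _ hb
    rw [cf_smul, cf_monomial, if_neg, mul_zero]
    intro h
    apply hb
    rw [Prod.mk.injEq] at h
    ext
    · exact h.1.symm
    · exact h.2.symm
  · simp

theorem mkP_mem {Y Z : ℕ} (c : Fin Y × Fin Z → ℚ) : mkP Y Z c ∈ Box Y Z := by
  rw [mkP, Fintype.linearCombination_apply]
  refine Submodule.sum_mem _ fun i _ => Submodule.smul_mem _ _ ?_
  intro m hm
  rw [cf_monomial] at hm
  have : m = (i.1.1, i.2.1) := by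
    by_contra h
    rw [if_neg h] at hm
    exact hm rfl
  rw [this]
  exact ⟨i.1.2, i.2.2⟩

theorem mkP_eq_zero {Y Z : ℕ} {c : Fin Y × Fin Z → ℚ} (h : mkP Y Z c = 0) : c = 0 := by
  funext m
  rw [← cf_mkP_in c m, h, cf_zero]
  rfl

/-- Coefficient extraction. -/
def exP (Y Z : ℕ) : Biv ℚ →ₗ[ℚ] (Fin Y × Fin Z → ℚ) where
  toFun p m := cf p (m.1.1, m.2.1)
  map_add' p q := by funext m; exact cf_add _ _ _
  map_smul' c q := by funext m; exact cf_smul _ _ _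

theorem exP_eq_zero {Y Z : ℕ} {p : Biv ℚ} (hp : p ∈ Box Y Z) (h : exP Y Z p = 0) : p = 0 := by
  apply biv_ext
  intro m
  rw [cf_zero]
  by_contra h0
  have h1 := hp m h0
  have h2 := congrFun h (⟨m.1, h1.1⟩, ⟨m.2, h1.2⟩)
  exact h0 h2

theorem exists_mkP {Y Z : ℕ} {p : Biv ℚ} (hp : p ∈ Box Y Z) : ∃ c, mkP Y Z c = p := by
  refine ⟨exP Y Z p, ?_⟩
  rw [← sub_eq_zero]
  apply exP_eq_zero (Submodule.sub_mem _ (mkP_mem _) hp)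
  funext m
  change cf (mkP Y Z (exP Y Z p) - p) (m.1.1, m.2.1) = 0
  rw [cf_sub, cf_mkP_in]
  exact sub_self _

theorem Box_natDegree {p : Biv ℚ} {Y Z : ℕ} (hp : p ∈ Box Y Z) : p ∈ Box (p.natDegree + 1) Z := by
  intro m hm
  refine ⟨?_, (hp m hm).2⟩
  by_contra h
  apply hm
  rw [cf, coeff_eq_zero_of_natDegree_lt (p := p) (by omega), coeff_zero]

theorem natDegree_lt_of_Box {p : Biv ℚ} {Y Z : ℕ} (hp : p ∈ Box (Y + 1) Z) : p.natDegree ≤ Y := by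
  rw [natDegree_le_iff_coeff_eq_zero]
  intro a ha
  ext b
  by_contra h
  have := hp (a, b) h
  simp only at this
  omega

theorem one_mem_Box {Y Z : ℕ} (hY : 0 < Y) (hZ : 0 < Z) : (1 : Biv ℚ) ∈ Box Y Z := by
  have h : (1 : Biv ℚ) = monomial 0 (monomial 0 1) := by simp
  intro m hm
  rw [h, cf_monomial] at hm
  have : m = (0, 0) := by
    by_contra h
    rw [if_neg h] at hm
    exact hm rfl
  rw [this]
  exact ⟨hY, hZ⟩

theorem eq_C_of_Box {Z : ℕ} {p : Biv ℚ} (hp : p ∈ Box 1 Z) : p = C (p.coeff 0) ∧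
    ∀ b, (p.coeff 0).coeff b ≠ 0 → b < Z := by
  constructor
  · exact eq_C_of_natDegree_eq_zero (Nat.le_zero.1 (natDegree_lt_of_Box hp))
  · intro b hb
    exact (hp (0, b) hb).2

theorem elim_aux {f g a b : Biv ℚ} (hf0 : f ≠ 0) (hrel : IsRelPrime f g)
    (h : a * f + b * g = 0) (hb : b.degree < f.degree) : a = 0 ∧ b = 0 := by
  have h1 : f ∣ g * b := ⟨-a, by linear_combination h⟩
  have h2 : f ∣ b := hrel.dvd_of_dvd_mul_left h1
  have h3 : b = 0 := by
    by_contra hb0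
    exact absurd (degree_le_of_dvd h2 hb0) (not_le.2 hb)
  refine ⟨?_, h3⟩
  rw [h3, zero_mul, add_zero] at h
  exact (mul_eq_zero.1 h).resolve_right hf0

theorem elim (d : ℕ) (f g : Biv ℚ) (hf : f ∈ Box (d + 1) (d + 1)) (hg : g ∈ Box (d + 1) (d + 1))
    (hf0 : f ≠ 0) (hrel : IsRelPrime f g) :
    ∃ r : Biv ℚ, r ≠ 0 ∧ r ∈ Box 1 (2 * d ^ 2 + 1 + d) ∧
      ∃ a ∈ Box (2 * d ^ 2 + 1 + d) (2 * d ^ 2 + 1 + d),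
      ∃ b ∈ Box (2 * d ^ 2 + 1 + d) (2 * d ^ 2 + 1 + d), a * f + b * g = r := by
  set m := f.natDegree with hm
  set n := g.natDegree with hn
  have hmd : m ≤ d := natDegree_lt_of_Box hf
  have hnd : n ≤ d := natDegree_lt_of_Box hg
  have hf' : f ∈ Box (m + 1) (d + 1) := Box_natDegree hf
  have hg' : g ∈ Box (n + 1) (d + 1) := Box_natDegree hg
  set K := 2 * d ^ 2 + 1 with hK
  rcases Nat.eq_zero_or_pos m with h0 | hpos
  · refine ⟨f, hf0, ?_, 1, one_mem_Box (by omega) (by omega), 0, Submodule.zero_mem _, by ring⟩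
    rw [h0] at hf'
    exact Box_mono (by omega) (by omega) hf'
  let Φ : ((Fin n × Fin K → ℚ) × (Fin m × Fin K → ℚ) × (Fin 1 × Fin (K + d) → ℚ)) →ₗ[ℚ] Biv ℚ :=
    LinearMap.coprod ((LinearMap.mulRight ℚ f).comp (mkP n K))
      (LinearMap.coprod ((LinearMap.mulRight ℚ g).comp (mkP m K)) (-(mkP 1 (K + d))))
  have hΦ : ∀ a b r, Φ (a, b, r) = mkP n K a * f + (mkP m K b * g - mkP 1 (K + d) r) := by
    intro a b r
    simp [Φ, sub_eq_add_neg]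
  have hker : LinearMap.ker ((exP (m + n) (K + d)).comp Φ) ≠ ⊥ := by
    apply LinearMap.ker_ne_bot_of_finrank_lt
    simp only [Module.finrank_prod, Module.finrank_fintype_fun_eq_card, Fintype.card_prod,
      Fintype.card_fin]
    nlinarith [Nat.mul_le_mul hmd (le_refl d), Nat.mul_le_mul hnd (le_refl d)]
  obtain ⟨⟨a, b, r⟩, hx, hx0⟩ := Submodule.exists_mem_ne_zero_of_ne_bot hker
  have h1 : Φ (a, b, r) = 0 := by
    apply exP_eq_zero (Y := m + n) (Z := K + d) _ (LinearMap.mem_ker.1 hx)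
    rw [hΦ]
    refine Submodule.add_mem _ ?_ (Submodule.sub_mem _ ?_ ?_)
    · have := Box_mul (mkP_mem a) hf'
      rwa [add_comm n m] at this
    · exact Box_mul (mkP_mem b) hg'
    · exact Box_mono (by omega) le_rfl (mkP_mem r)
  rw [hΦ] at h1
  have h2 : mkP n K a * f + mkP m K b * g = mkP 1 (K + d) r := by linear_combination h1
  refine ⟨mkP 1 (K + d) r, ?_, mkP_mem r, mkP n K a, ?_, mkP m K b, ?_, h2⟩
  · intro hr
    apply hx0
    rw [hr] at h2
    have hdeg : (mkP m K b).degree < f.degree := by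
      rw [degree_eq_natDegree hf0, ← hm, degree_lt_iff_coeff_zero]
      intro i hi
      ext j
      by_contra h
      have := (mkP_mem b) (i, j) h
      simp only at this
      omega
    obtain ⟨ha, hb⟩ := elim_aux hf0 hrel h2 hdeg
    rw [mkP_eq_zero ha, mkP_eq_zero hb, mkP_eq_zero hr]
    rfl
  · have : d ≤ K + d := by omega
    exact Box_mono (by omega) (by omega) (mkP_mem a)
  · exact Box_mono (by omega) (by omega) (mkP_mem b)

theorem cf_swap (p : Biv ℚ) (m : ℕ × ℕ) : cf (Bivariate.swap p) m = cf p m.swap := by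
  induction p using Polynomial.induction_on' with
  | add p q hp hq => rw [map_add, cf_add, cf_add, hp, hq]
  | monomial a c =>
    induction c using Polynomial.induction_on' with
    | add p q hp hq => rw [map_add, map_add, cf_add, cf_add, hp, hq]
    | monomial b c =>
      rw [Bivariate.swap_monomial_monomial, cf_monomial, cf_monomial]
      rcases m with ⟨i, j⟩
      simp [and_comm]

theorem swap_mem_Box {Y Z : ℕ} {p : Biv ℚ} (hp : p ∈ Box Y Z) : Bivariate.swap p ∈ Box Z Y := by
  intro m hm
  rw [cf_swap] at hm
  exact (hp _ hm).symm

theorem elimRS {t d : ℕ} (F : Fin t → Biv ℚ) (hF : ∀ i, F i ∈ Box (d + 1) (d + 1))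
    (hr : ∃ r : ℚ[X], r ≠ 0 ∧ (C r : Biv ℚ) ∈ Ideal.span (Set.range F))
    (hs : ∃ r : ℚ[X], r ≠ 0 ∧ (r.map C : Biv ℚ) ∈ Ideal.span (Set.range F)) :
    (∃ r : Biv ℚ, r ≠ 0 ∧ r ∈ Box 1 (2 * d ^ 2 + 1 + d) ∧ ∃ q : Fin t → Biv ℚ,
      (∀ i, q i ∈ Box (2 * d ^ 2 + 1 + d) (2 * d ^ 2 + 1 + d)) ∧ ∑ i, q i * F i = r) ∧
    (∃ r : Biv ℚ, r ≠ 0 ∧ r ∈ Box (2 * d ^ 2 + 1 + d) 1 ∧ ∃ q : Fin t → Biv ℚ,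
      (∀ i, q i ∈ Box (2 * d ^ 2 + 1 + d) (2 * d ^ 2 + 1 + d)) ∧ ∑ i, q i * F i = r) := by
  obtain ⟨a, b, h0, hrel⟩ := exists_coprime F hr hs
  have hcomb : ∀ c : Fin t → ℚ, ∑ i, c i • F i ∈ Box (d + 1) (d + 1) := fun c =>
    Submodule.sum_mem _ fun i _ => Submodule.smul_mem _ _ (hF i)
  have hfin : ∀ u v : Biv ℚ, u * (∑ i, a i • F i) + v * (∑ i, b i • F i) =
      ∑ i, (a i • u + b i • v) * F i := by
    intro u v
    rw [Finset.mul_sum, Finset.mul_sum, ← Finset.sum_add_distrib]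
    refine Finset.sum_congr rfl fun i _ => ?_
    rw [add_mul, mul_smul_comm, mul_smul_comm, smul_mul_assoc, smul_mul_assoc]
  constructor
  · obtain ⟨r, hr0, hr, u, hu, v, hv, huv⟩ := elim d _ _ (hcomb a) (hcomb b) h0 hrel
    refine ⟨r, hr0, hr, fun i => a i • u + b i • v, ?_, ?_⟩
    · intro i
      exact Submodule.add_mem _ (Submodule.smul_mem _ _ hu) (Submodule.smul_mem _ _ hv)
    · rw [← hfin, huv]
  · have hrel' : IsRelPrime (Bivariate.swap (∑ i, a i • F i)) (Bivariate.swap (∑ i, b i • F i)) := by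
      intro q hq1 hq2
      have h1 : Bivariate.swap q ∣ ∑ i, a i • F i := by
        have := map_dvd (Bivariate.swap (R := ℚ)) hq1
        rwa [Bivariate.swap_swap_apply] at this
      have h2 : Bivariate.swap q ∣ ∑ i, b i • F i := by
        have := map_dvd (Bivariate.swap (R := ℚ)) hq2
        rwa [Bivariate.swap_swap_apply] at this
      have h3 := (hrel h1 h2).map (Bivariate.swap (R := ℚ))
      rwa [Bivariate.swap_swap_apply] at h3
    obtain ⟨r, hr0, hr, u, hu, v, hv, huv⟩ := elim d _ _ (swap_mem_Box (hcomb a))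
      (swap_mem_Box (hcomb b)) (by
        intro h
        apply h0
        rw [← Bivariate.swap_swap_apply (∑ i, a i • F i), h, map_zero]) hrel'
    refine ⟨Bivariate.swap r, ?_, swap_mem_Box hr, fun i => a i • Bivariate.swap u +
      b i • Bivariate.swap v, ?_, ?_⟩
    · intro h
      apply hr0
      rw [← Bivariate.swap_swap_apply r, h, map_zero]
    · intro i
      exact Submodule.add_mem _ (Submodule.smul_mem _ _ (swap_mem_Box hu))
        (Submodule.smul_mem _ _ (swap_mem_Box hv))
    · rw [← hfin, ← huv, map_add, map_mul, map_mul, Bivariate.swap_swap_apply,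
        Bivariate.swap_swap_apply]

theorem cf_prod (p q : ℚ[X]) (m : ℕ × ℕ) :
    cf (C p * q.map C : Biv ℚ) m = p.coeff m.2 * q.coeff m.1 := by
  simp [cf, coeff_C_mul, coeff_mul_C]

theorem prod_mem_Box {p q : ℚ[X]} {Y Z : ℕ} (hp : ∀ b, p.coeff b ≠ 0 → b < Z)
    (hq : ∀ a, q.coeff a ≠ 0 → a < Y) : (C p * q.map C : Biv ℚ) ∈ Box Y Z := by
  intro m hm
  rw [cf_prod] at hm
  exact ⟨hq _ (right_ne_zero_of_mul hm), hp _ (left_ne_zero_of_mul hm)⟩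

theorem coeff_lt_of_natDegree {p : ℚ[X]} {n : ℕ} (h : p.natDegree < n) :
    ∀ b, p.coeff b ≠ 0 → b < n := by
  intro b hb
  exact (le_natDegree_of_ne_zero hb).trans_lt h

theorem coeff_lt_of_degree {p q : ℚ[X]} (h : p.degree < q.degree) :
    ∀ b, p.coeff b ≠ 0 → b < q.natDegree := by
  intro b hb
  have h1 := le_degree_of_ne_zero hb
  have h2 := (h1.trans_lt h).trans_le degree_le_natDegree
  exact_mod_cast h2

theorem xpow_div (R : ℚ[X]) (hR : R ≠ 0) (b : ℕ) : ∃ q r : ℚ[X], X ^ b = R * q + r ∧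
    r.degree < R.degree ∧ q.natDegree ≤ b ∧ r.natDegree ≤ b := by
  refine ⟨X ^ b / R, X ^ b % R, (EuclideanDomain.div_add_mod _ _).symm, ?_, ?_, ?_⟩
  · exact EuclideanDomain.mod_lt _ hR
  · have := degree_div_le (X ^ b) R
    have := natDegree_le_natDegree this
    simpa using this
  · have : (X ^ b % R).degree ≤ (X ^ b : ℚ[X]).degree := by
      by_cases h : (X ^ b : ℚ[X]).degree < R.degree
      · rw [(mod_eq_self_iff hR).2 h]
      · exact (EuclideanDomain.mod_lt (X ^ b) hR).le.trans (not_lt.1 h)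
    have := natDegree_le_natDegree this
    simpa using this

theorem division {R S : ℚ[X]} (hR : R ≠ 0) (hS : S ≠ 0) {D : ℕ} {w : Biv ℚ} (hw : w ∈ Box D D) :
    ∃ α ∈ Box D D, ∃ β ∈ Box D D, ∃ ρ ∈ Box S.natDegree R.natDegree,
      w = α * C R + β * S.map C + ρ := by
  have hmono : ∀ m : Fin D × Fin D, ∃ α ∈ Box D D, ∃ β ∈ Box D D,
      ∃ ρ ∈ Box S.natDegree R.natDegree,
      (monomial m.1.1 (monomial m.2.1 1) : Biv ℚ) = α * C R + β * S.map C + ρ := by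
    intro m
    obtain ⟨q1, r1, h1, hd1, hq1, hr1⟩ := xpow_div R hR m.2.1
    obtain ⟨q2, r2, h2, hd2, hq2, hr2⟩ := xpow_div S hS m.1.1
    have hm1 := m.1.2
    have hm2 := m.2.2
    refine ⟨C q1 * (X ^ m.1.1 : ℚ[X]).map C, ?_, C r1 * q2.map C, ?_, C r1 * r2.map C, ?_, ?_⟩
    · exact prod_mem_Box (coeff_lt_of_natDegree (by omega))
        (coeff_lt_of_natDegree (by rw [natDegree_X_pow]; omega))
    · exact prod_mem_Box (coeff_lt_of_natDegree (by omega)) (coeff_lt_of_natDegree (by omega))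
    · exact prod_mem_Box (coeff_lt_of_degree hd1) (coeff_lt_of_degree hd2)
    · have e : (monomial m.1.1 (monomial m.2.1 1) : Biv ℚ) =
          C (X ^ m.2.1) * (X ^ m.1.1 : ℚ[X]).map C := by
        rw [Polynomial.map_pow, map_X, ← monomial_one_right_eq_X_pow, C_mul_X_pow_eq_monomial]
      have e1 : (C (X ^ m.2.1) : Biv ℚ) = C R * C q1 + C r1 := by rw [h1]; simp
      have e2 : ((X ^ m.1.1 : ℚ[X]).map C : Biv ℚ) = S.map C * q2.map C + r2.map C := by
        rw [h2]; simp
      rw [e, e1, add_mul]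
      conv_lhs => rw [e2]
      conv_rhs => rw [e2]
      ring
  choose α hα β hβ ρ hρ he using hmono
  obtain ⟨c, rfl⟩ := exists_mkP hw
  refine ⟨∑ m, c m • α m, ?_, ∑ m, c m • β m, ?_, ∑ m, c m • ρ m, ?_, ?_⟩
  · exact Submodule.sum_mem _ fun i _ => Submodule.smul_mem _ _ (hα i)
  · exact Submodule.sum_mem _ fun i _ => Submodule.smul_mem _ _ (hβ i)
  · exact Submodule.sum_mem _ fun i _ => Submodule.smul_mem _ _ (hρ i)
  · rw [mkP, Fintype.linearCombination_apply, Finset.sum_mul, Finset.sum_mul,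
      ← Finset.sum_add_distrib, ← Finset.sum_add_distrib]
    refine Finset.sum_congr rfl fun m _ => ?_
    rw [he m, smul_mul_assoc, smul_mul_assoc, smul_add, smul_add]

theorem division_unique {R S : ℚ[X]} (hR : R ≠ 0) (hS : S.Monic) {A B ρ : Biv ℚ}
    (hρ : ρ ∈ Box S.natDegree R.natDegree) (h : ρ = A * C R + B * S.map C) : ρ = 0 := by
  let φ := Ideal.Quotient.mk (Ideal.span {R})
  have h1 : ρ.map φ = B.map φ * (S.map C).map φ := by
    rw [h]
    have : φ R = 0 := Ideal.Quotient.eq_zero_iff_mem.2 (Ideal.mem_span_singleton_self R)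
    simp [this]
  have h2 : ρ.map φ = 0 := by
    rcases subsingleton_or_nontrivial (ℚ[X] ⧸ Ideal.span {R}) with hs | hn
    · exact Subsingleton.elim _ _
    by_contra h0
    have hmon : ((S.map C).map φ).Monic := (hS.map _).map _
    apply hmon.not_dvd_of_degree_lt h0 _ (Dvd.intro_left (B.map φ) h1.symm)
    rw [(hS.map C).degree_map, hS.degree_map, degree_eq_natDegree hS.ne_zero,
      degree_lt_iff_coeff_zero]
    intro a ha
    rw [coeff_map]
    have : ρ.coeff a = 0 := by
      ext b
      by_contra hb
      have := (hρ (a, b) hb).1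
      simp only at this
      omega
    rw [this, map_zero]
  ext1 a
  have h3 : R ∣ ρ.coeff a := by
    rw [← Ideal.mem_span_singleton, ← Ideal.Quotient.eq_zero_iff_mem]
    have := congrArg (fun p => p.coeff a) h2
    simpa using this
  rw [coeff_zero]
  by_contra h0
  have h4 := natDegree_le_of_dvd h3 h0
  have h5 := (hρ (a, (ρ.coeff a).natDegree) (by simpa [cf] using h0)).2
  simp only at h5
  omega

theorem mem_some_Box (p : Biv ℚ) : ∃ D, p ∈ Box D D := by
  refine ⟨max p.natDegree (p.support.sup fun a => (p.coeff a).natDegree) + 1, ?_⟩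
  intro m hm
  have h1 : p.coeff m.1 ≠ 0 := by
    intro h
    apply hm
    rw [cf, h, coeff_zero]
  have h2 : m.1 ≤ p.natDegree := le_natDegree_of_ne_zero h1
  have h3 : m.2 ≤ (p.coeff m.1).natDegree := le_natDegree_of_ne_zero hm
  have h4 : (p.coeff m.1).natDegree ≤ p.support.sup fun a => (p.coeff a).natDegree :=
    Finset.le_sup (f := fun a => (p.coeff a).natDegree) (mem_support_iff.2 h1)
  constructor
  · have := le_max_left p.natDegree (p.support.sup fun a => (p.coeff a).natDegree)
    omega
  · have := le_max_right p.natDegree (p.support.sup fun a => (p.coeff a).natDegree)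
    omega

theorem elimRS' {t d : ℕ} (F : Fin t → Biv ℚ) (hF : ∀ i, F i ∈ Box (d + 1) (d + 1))
    (hr : ∃ r : ℚ[X], r ≠ 0 ∧ (C r : Biv ℚ) ∈ Ideal.span (Set.range F))
    (hs : ∃ r : ℚ[X], r ≠ 0 ∧ (r.map C : Biv ℚ) ∈ Ideal.span (Set.range F)) :
    (∃ r : ℚ[X], r.Monic ∧ r.natDegree < 2 * d ^ 2 + 1 + d ∧ ∃ q : Fin t → Biv ℚ,
      (∀ i, q i ∈ Box (2 * d ^ 2 + 1 + d) (2 * d ^ 2 + 1 + d)) ∧ ∑ i, q i * F i = C r) ∧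
    (∃ r : ℚ[X], r.Monic ∧ r.natDegree < 2 * d ^ 2 + 1 + d ∧ ∃ q : Fin t → Biv ℚ,
      (∀ i, q i ∈ Box (2 * d ^ 2 + 1 + d) (2 * d ^ 2 + 1 + d)) ∧ ∑ i, q i * F i = r.map C) := by
  obtain ⟨⟨r, hr0, hr, q, hq, hqr⟩, ⟨s, hs0, hs, q', hq', hqs⟩⟩ := elimRS F hF hr hs
  have key : ∀ r : Biv ℚ, r ≠ 0 → ∀ L, r ∈ Box 1 L → ∃ p : ℚ[X], ∃ c : ℚ, p.Monic ∧ p.natDegree < L ∧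
      c • r = C p := by
    intro r hr0 L hr
    obtain ⟨h1, h2⟩ := eq_C_of_Box hr
    have h3 : r.coeff 0 ≠ 0 := by
      intro h
      apply hr0
      rw [h1, h, C_0]
    refine ⟨r.coeff 0 * C (r.coeff 0).leadingCoeff⁻¹, (r.coeff 0).leadingCoeff⁻¹,
      monic_mul_leadingCoeff_inv h3, ?_, ?_⟩
    · rw [natDegree_mul_leadingCoeff_inv _ h3]
      exact h2 _ (by simpa using h3)
    · have h4 : ∀ c : ℚ, ∀ p : ℚ[X], c • (C p : Biv ℚ) = C (p * C c) := by
        intro c p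
        rw [smul_C, mul_comm, ← smul_eq_C_mul]
      rw [← h4, ← h1]
  constructor
  · obtain ⟨p, c, hp, hpd, hc⟩ := key r hr0 _ hr
    refine ⟨p, hp, hpd, fun i => c • q i, fun i => Submodule.smul_mem _ _ (hq i), ?_⟩
    rw [← hc, ← hqr, Finset.smul_sum]
    exact Finset.sum_congr rfl fun i _ => smul_mul_assoc _ _ _
  · obtain ⟨p, c, hp, hpd, hc⟩ := key (Bivariate.swap s) (by
      intro h
      apply hs0
      rw [← Bivariate.swap_swap_apply s, h, map_zero]) _ (swap_mem_Box hs)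
    refine ⟨p, hp, hpd, fun i => c • q' i, fun i => Submodule.smul_mem _ _ (hq' i), ?_⟩
    rw [← Bivariate.swap_C, ← hc, map_smul, Bivariate.swap_swap_apply, ← hqs, Finset.smul_sum]
    exact Finset.sum_congr rfl fun i _ => smul_mul_assoc _ _ _

theorem bounded {t d : ℕ} (F : Fin t → Biv ℚ) (hF : ∀ i, F i ∈ Box (d + 1) (d + 1))
    (L : ℕ) (R S : ℚ[X]) (hR : R.Monic) (hS : S.Monic) (hRL : R.natDegree < L)
    (hSL : S.natDegree < L) (qR qS : Fin t → Biv ℚ) (hqR : ∀ i, qR i ∈ Box L L)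
    (hqS : ∀ i, qS i ∈ Box L L) (heR : ∑ i, qR i * F i = C R) (heS : ∑ i, qS i * F i = S.map C)
    (u : Biv ℚ) (hu : u ∈ Ideal.span (Set.range F)) (huB : u ∈ Box L L) :
    ∃ q : Fin t → Biv ℚ, (∀ i, q i ∈ Box (2 * L + d) (2 * L + d)) ∧ u = ∑ i, q i * F i := by
  obtain ⟨c, hc⟩ := Ideal.mem_span_range_iff_exists_fun.1 hu
  have hdec : ∀ i, ∃ α β ρ, ρ ∈ Box S.natDegree R.natDegree ∧
      c i = α * C R + β * S.map C + ρ := by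
    intro i
    obtain ⟨D, hD⟩ := mem_some_Box (c i)
    obtain ⟨α, _, β, _, ρ, hρ, h⟩ := division hR.ne_zero hS.ne_zero hD
    exact ⟨α, β, ρ, hρ, h⟩
  choose α β ρ hρ hdec using hdec
  have hρL : ∀ i, ρ i ∈ Box L L := fun i => Box_mono hSL.le hRL.le (hρ i)
  have hw : u - ∑ i, ρ i * F i ∈ Box (L + d) (L + d) := by
    refine Submodule.sub_mem _ (Box_mono (by omega) (by omega) huB) ?_
    exact Submodule.sum_mem _ fun i _ => Box_mul (hρL i) (hF i)
  obtain ⟨a, ha, b, hb, r, hr, he⟩ := division hR.ne_zero hS.ne_zero hw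
  have hw2 : u - ∑ i, ρ i * F i = (∑ i, α i * F i) * C R + (∑ i, β i * F i) * S.map C := by
    rw [← hc, ← Finset.sum_sub_distrib, Finset.sum_mul, Finset.sum_mul, ← Finset.sum_add_distrib]
    refine Finset.sum_congr rfl fun i _ => ?_
    rw [hdec i]
    ring
  have hr0 : r = 0 := by
    apply division_unique (A := ∑ i, α i * F i - a) (B := ∑ i, β i * F i - b) hR.ne_zero hS hr
    linear_combination hw2 - he
  refine ⟨fun i => ρ i + (a * qR i + b * qS i), ?_, ?_⟩
  · intro i
    refine Submodule.add_mem _ (Box_mono (by omega) (by omega) (hρL i)) (Submodule.add_mem _ ?_ ?_)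
    · exact Box_mono (by omega) (by omega)
        (Box_mul ha (Box_mono (Nat.le_succ L) (Nat.le_succ L) (hqR i)))
    · exact Box_mono (by omega) (by omega)
        (Box_mul hb (Box_mono (Nat.le_succ L) (Nat.le_succ L) (hqS i)))
  · have h1 : ∑ i, (ρ i + (a * qR i + b * qS i)) * F i =
        ∑ i, ρ i * F i + (a * ∑ i, qR i * F i + b * ∑ i, qS i * F i) := by
      rw [Finset.mul_sum, Finset.mul_sum, ← Finset.sum_add_distrib, ← Finset.sum_add_distrib]
      refine Finset.sum_congr rfl fun i _ => ?_
      ring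
    rw [h1, heR, heS]
    linear_combination he + hr0

theorem numeric {t d n : ℕ} {h : ℝ} (ht : 2 ≤ t) (hd : 1 ≤ d) (hh : 0 ≤ h)
    (hn : n ≤ (2 * (2 * d ^ 2 + 1 + d) + d + d) ^ 2) :
    (n.factorial : ℝ) * Real.exp h ^ n ≤ Real.exp (Cfun t d (Delta3 d) h) := by
  set M := t * Delta3 d with hM
  set N := M ^ 2 * d - M * d + M with hN
  have hBM : 2 * (2 * d ^ 2 + 1 + d) + d + d ≤ M := by
    have h1 : d ≤ max d 3 := le_max_left _ _
    have h2 : 3 ≤ max d 3 := le_max_right _ _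
    have h3 : 2 * Delta3 d ≤ M := Nat.mul_le_mul_right _ ht
    have h4 : max d 3 ^ 2 ≤ max d 3 ^ 4 := Nat.pow_le_pow_right (by omega) (by omega)
    have h5 : d ^ 2 ≤ max d 3 ^ 2 := Nat.pow_le_pow_left h1 2
    have h6 : Delta3 d = 16 * max d 3 ^ 4 + 2 * max d 3 ^ 2 + 2 * max d 3 := rfl
    have h8 : 1 ≤ max d 3 ^ 4 := Nat.one_le_pow _ _ (by omega)
    rw [h6] at h3
    clear_value M
    clear h6 hN
    generalize max d 3 = D at *
    generalize D ^ 4 = D4 at *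
    generalize D ^ 2 = D2 at *
    generalize d ^ 2 = d2 at *
    omega
  have hM1 : 1 ≤ M := by omega
  have hMN : M ^ 2 ≤ N := by
    obtain ⟨e, rfl⟩ : ∃ e, d = e + 1 := ⟨d - 1, by omega⟩
    have h1 : M * (e + 1) ≤ M ^ 2 * (e + 1) :=
      Nat.mul_le_mul_right _ (by nlinarith)
    have h2 : M * e ≤ M ^ 2 * e := Nat.mul_le_mul_right _ (by nlinarith)
    have h3 : M ^ 2 * (e + 1) = M ^ 2 * e + M ^ 2 := by ring
    have h4 : M * (e + 1) = M * e + M := by ring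
    omega
  have hnN : n ≤ N := hn.trans ((Nat.pow_le_pow_left hBM 2).trans hMN)
  have hN1 : 1 ≤ N := by nlinarith
  have hfac : (n.factorial : ℝ) ≤ (N : ℝ) ^ N := by
    have h1 : n.factorial ≤ N ^ N :=
      (Nat.factorial_le hnN).trans (Nat.factorial_le_pow N)
    exact_mod_cast h1
  have hNpos : (0 : ℝ) < N := by exact_mod_cast hN1
  have hpow : (N : ℝ) ^ N = Real.exp (N * Real.log N) := by
    rw [Real.exp_nat_mul, Real.exp_log hNpos]
  have hexp : Real.exp h ^ n ≤ Real.exp (N * h) := by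
    rw [← Real.exp_nat_mul]
    apply Real.exp_le_exp.2
    have : (n : ℝ) ≤ N := by exact_mod_cast hnN
    exact mul_le_mul_of_nonneg_right this hh
  have hlog : 0 ≤ Real.log ((M : ℝ) * ((d : ℝ) + 1)) := by
    apply Real.log_nonneg
    have h1 : (1 : ℝ) ≤ M := by exact_mod_cast hM1
    have h2 : (0 : ℝ) ≤ d := Nat.cast_nonneg d
    nlinarith
  have hlog2 : 0 ≤ Real.log 2 := Real.log_nonneg (by norm_num)
  calc (n.factorial : ℝ) * Real.exp h ^ n ≤ Real.exp (N * Real.log N) * Real.exp (N * h) := by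
        rw [← hpow]
        exact mul_le_mul hfac hexp (by positivity) (by positivity)
    _ = Real.exp (N * Real.log N + N * h) := by rw [Real.exp_add]
    _ ≤ _ := by
        apply Real.exp_le_exp.2
        rw [Cfun, Bfun, ← hM, ← hN]
        nlinarith

theorem totDeg_Box {d : ℕ} {f : Biv ℤ} (h : totDeg f ≤ d) : toQ f ∈ Box (d + 1) (d + 1) := by
  intro m hm
  rw [cf_toQ] at hm
  have hm' : cf f m ≠ 0 := by
    intro h0
    apply hm
    rw [h0, Int.cast_zero]
  have h1 : f.coeff m.1 ≠ 0 := by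
    intro h
    apply hm'
    rw [cf, h, coeff_zero]
  have h3 : m.2 ≤ (f.coeff m.1).natDegree := le_natDegree_of_ne_zero hm'
  have h4 : m.1 + (f.coeff m.1).natDegree ≤ totDeg f :=
    Finset.le_sup (f := fun a => a + (f.coeff a).natDegree) (mem_support_iff.2 h1)
  omega

theorem h_nonneg {t : ℕ} (f : Fin t → Biv ℤ) (h : ℝ)
    (hht : ∀ i (a b : ℕ), ((|((f i).coeff a).coeff b| : ℤ) : ℝ) ≤ Real.exp h)
    (I : Ideal (Biv ℚ)) (hI : I = Ideal.span (Set.range fun i => toQ (f i)))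
    (u : Biv ℚ) (hu : u ∈ I) (hu0 : u ≠ 0) : 0 ≤ h := by
  by_contra hneg
  have hf : ∀ i, f i = 0 := by
    intro i
    apply biv_ext
    intro m
    rw [cf_zero]
    by_contra h0
    have h1 : (1 : ℤ) ≤ |cf (f i) m| := Int.one_le_abs h0
    have h2 : (1 : ℝ) ≤ ((|cf (f i) m| : ℤ) : ℝ) := by exact_mod_cast h1
    have h3 := h2.trans (hht i m.1 m.2)
    exact hneg (Real.one_le_exp_iff.1 h3)
  apply hu0
  rw [hI] at hu
  have : Ideal.span (Set.range fun i => toQ (f i)) = ⊥ := by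
    rw [Ideal.span_eq_bot]
    rintro x ⟨i, rfl⟩
    simp [hf i]
  rw [this] at hu
  exact hu

theorem lmon_C_monic (R : ℚ[X]) : lmon (C R : Biv ℚ) = (0, R.natDegree) := by
  simp [lmon]

theorem lmon_map_monic {S : ℚ[X]} (hS : S.Monic) : lmon (S.map C : Biv ℚ) = (S.natDegree, 0) := by
  have h1 : (S.map C : Biv ℚ).leadingCoeff = 1 := hS.map C
  rw [lmon, h1, natDegree_one, hS.natDegree_map]

theorem gb_exists {s : ℕ} {g : Fin (s + 1) → Biv ℚ} {I : Ideal (Biv ℚ)} (hg : IsReducedGB g I)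
    {u : Biv ℚ} (hu : u ∈ I) (hu0 : u ≠ 0) : ∃ l, monDvd (lmon (g l)) (lmon u) := by
  obtain ⟨x, hx, h⟩ := hg.1.2 u hu hu0
  rw [List.mem_ofFn] at hx
  obtain ⟨l, rfl⟩ := hx
  exact ⟨l, h⟩

theorem gb_mem {s : ℕ} {g : Fin (s + 1) → Biv ℚ} {I : Ideal (Biv ℚ)} (hg : IsReducedGB g I)
    (j) : g j ≠ 0 ∧ g j ∈ I :=
  hg.1.1 (g j) (by rw [List.mem_ofFn]; exact ⟨j, rfl⟩)

theorem gb_Box {s L : ℕ} {g : Fin (s + 1) → Biv ℚ} {I : Ideal (Biv ℚ)} (hg : IsReducedGB g I)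
    {R S : ℚ[X]} (hR : R.Monic) (hS : S.Monic) (hRL : R.natDegree < L) (hSL : S.natDegree < L)
    (hRI : (C R : Biv ℚ) ∈ I) (hSI : (S.map C : Biv ℚ) ∈ I) (j) : g j ∈ Box L L := by
  have hR0 : (C R : Biv ℚ) ≠ 0 := by simpa using hR.ne_zero
  have hS0 : (S.map C : Biv ℚ) ≠ 0 := (hS.map C).ne_zero
  obtain ⟨l1, h1⟩ := gb_exists hg hRI hR0
  obtain ⟨l2, h2⟩ := gb_exists hg hSI hS0
  rw [lmon_C_monic] at h1
  rw [lmon_map_monic hS] at h2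
  have top : ∀ m, cf (g j) m ≠ 0 → ¬ monLt (lmon (g j)) m := fun m hm hlt => hm (cf_above hlt)
  intro m hm
  have htop := top m hm
  simp only [monDvd, monLt] at *
  constructor
  · by_cases hj : j = l2
    · subst hj
      omega
    · have := hg.2.2.1 j l2 hj m hm
      simp only [monDvd] at this
      omega
  · by_cases hj : j = l1
    · subst hj
      omega
    · have := hg.2.2.1 j l1 hj m hm
      simp only [monDvd] at this
      omega

theorem gb_red {s : ℕ} {g : Fin (s + 1) → Biv ℚ} {I : Ideal (Biv ℚ)} (hg : IsReducedGB g I)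
    (j) {u : Biv ℚ} (hu : u ∈ I) (hu0 : u ≠ 0) (hne : lmon u ≠ lmon (g j)) :
    cf (g j) (lmon u) = 0 := by
  obtain ⟨l, hl⟩ := gb_exists hg hu hu0
  by_contra h0
  by_cases hj : j = l
  · subst hj
    have h1 : ¬ monLt (lmon (g j)) (lmon u) := fun hlt => h0 (cf_above hlt)
    apply hne
    simp only [monDvd, monLt] at *
    ext <;> omega
  · exact hg.2.2.1 j l hj _ h0 hl

/-- Rows of the Macaulay matrix. -/
def row {t T : ℕ} (f : Fin t → Biv ℤ) (r : Fin t × Fin T × Fin T) : Biv ℤ :=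
  X ^ r.2.1.1 * (C (X ^ r.2.2.1) * f r.1)

theorem toQ_row {t T : ℕ} (f : Fin t → Biv ℤ) (r : Fin t × Fin T × Fin T) :
    toQ (row f r) = monomial r.2.1.1 (monomial r.2.2.1 1) * toQ (f r.1) := by
  have h : (monomial r.2.1.1 (monomial r.2.2.1 1) : Biv ℚ) = X ^ r.2.1.1 * C (X ^ r.2.2.1) := by
    rw [mul_comm, C_mul_X_pow_eq_monomial, monomial_one_right_eq_X_pow]
  rw [h, row, map_mul, map_mul, mul_assoc]
  simp [toQ]

theorem row_mem_Box {t T d : ℕ} (f : Fin t → Biv ℤ) (hF : ∀ i, toQ (f i) ∈ Box (d + 1) (d + 1))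
    (r : Fin t × Fin T × Fin T) : toQ (row f r) ∈ Box (T + d) (T + d) := by
  rw [toQ_row]
  refine Box_mul ?_ (hF _)
  intro m hm
  rw [cf_monomial] at hm
  have : m = (r.2.1.1, r.2.2.1) := by
    by_contra h
    exact hm (if_neg h)
  rw [this]
  exact ⟨r.2.1.2, r.2.2.2⟩

theorem row_bound {t T : ℕ} (f : Fin t → Biv ℤ) (h : ℝ)
    (hht : ∀ i (a b : ℕ), ((|((f i).coeff a).coeff b| : ℤ) : ℝ) ≤ Real.exp h)
    (r : Fin t × Fin T × Fin T) (m : ℕ × ℕ) : ((|cf (row f r) m| : ℤ) : ℝ) ≤ Real.exp h := by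
  rw [row, cf_mono]
  split_ifs
  · exact hht _ _ _
  · simpa using (Real.exp_pos h).le

theorem comb_row {t T : ℕ} (f : Fin t → Biv ℤ) (c : Fin t → Fin T × Fin T → ℚ) :
    ∑ i, mkP T T (c i) * toQ (f i) =
      ∑ r : Fin t × Fin T × Fin T, c r.1 r.2 • toQ (row f r) := by
  rw [Fintype.sum_prod_type]
  refine Finset.sum_congr rfl fun i _ => ?_
  rw [mkP, Fintype.linearCombination_apply, Finset.sum_mul]
  refine Finset.sum_congr rfl fun m _ => ?_
  rw [toQ_row, smul_mul_assoc]

theorem macaulay {t s d T L : ℕ} (f : Fin t → Biv ℤ) (h : ℝ)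
    (hF : ∀ i, toQ (f i) ∈ Box (d + 1) (d + 1))
    (hht : ∀ i (a b : ℕ), ((|((f i).coeff a).coeff b| : ℤ) : ℝ) ≤ Real.exp h)
    (I : Ideal (Biv ℚ)) (hI : I = Ideal.span (Set.range fun i => toQ (f i)))
    (g : Fin (s + 1) → Biv ℚ) (hg : IsReducedGB g I) (hLT : L ≤ T)
    (hgL : ∀ j, g j ∈ Box L L)
    (hgq : ∀ j, ∃ q : Fin t → Biv ℚ, (∀ i, q i ∈ Box T T) ∧ g j = ∑ i, q i * toQ (f i)) :
    ∃ (n : ℕ) (β : ℤ), n ≤ (T + d) ^ 2 ∧ β ≠ 0 ∧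
      ((|β| : ℤ) : ℝ) ≤ n.factorial * Real.exp h ^ n ∧
      ∃ gz : Fin (s + 1) → Biv ℤ, (∀ j, toQ (gz j) = C (C (β : ℚ)) * g j) ∧
      (∀ j m, ((|cf (gz j) m| : ℤ) : ℝ) ≤ n.factorial * Real.exp h ^ n) ∧
      ∀ j, gz j ∈ Ideal.span (Set.range f) := by
  let B := T + d
  have hrowI : ∀ r : Fin t × Fin T × Fin T, toQ (row f r) ∈ I := by
    intro r
    rw [toQ_row, hI]
    exact Ideal.mul_mem_left _ _ (Ideal.subset_span ⟨r.1, rfl⟩)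
  let v : Fin t × Fin T × Fin T → Fin B × Fin B → ℤ := fun r m => cf (row f r) (m.1.1, m.2.1)
  let Q : Set (Fin B × Fin B) := {m | ∃ u ∈ I, u ≠ 0 ∧ lmon u = (m.1.1, m.2.1)}
  have hcomb : ∀ (c : Fin t × Fin T × Fin T → ℚ) (m : Fin B × Fin B),
      ∑ r, c r * (v r m : ℚ) = cf (∑ r, c r • toQ (row f r)) (m.1.1, m.2.1) := by
    intro c m
    rw [cf_sum]
    refine Finset.sum_congr rfl fun r _ => ?_
    rw [cf_smul, cf_toQ]
  have inj : ∀ c : Fin t × Fin T × Fin T → ℚ, (∀ m ∈ Q, ∑ r, c r * (v r m : ℚ) = 0) →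
      ∀ m, ∑ r, c r * (v r m : ℚ) = 0 := by
    intro c hc m
    have hU0 : (∑ r, c r • toQ (row f r)) = 0 := by
      by_contra hU
      have hUI : (∑ r, c r • toQ (row f r)) ∈ I := by
        refine Submodule.sum_mem _ fun r _ => ?_
        exact Submodule.smul_of_tower_mem I (c r) (hrowI r)
      have hUB : (∑ r, c r • toQ (row f r)) ∈ Box B B :=
        Submodule.sum_mem _ fun r _ => Submodule.smul_mem _ _ (row_mem_Box f hF r)
      have hne := cf_lmon_ne hU
      have hb := hUB _ hne
      have := hc (⟨_, hb.1⟩, ⟨_, hb.2⟩) ⟨_, hUI, hU, rfl⟩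
      rw [hcomb] at this
      exact hne this
    rw [hcomb, hU0, cf_zero]
  obtain ⟨n, β, hn, hβ, hβb, hz⟩ := LA v (Real.exp h) (fun r m => row_bound f h hht r _) Q inj
  refine ⟨n, β, ?_, hβ, hβb, ?_⟩
  · simpa [B, sq] using hn
  have hgB : ∀ j, g j ∈ Box B B := fun j =>
    Box_mono (by omega) (by omega) (hgL j)
  have hex : ∀ j, ∃ z : Fin t × Fin T × Fin T → ℤ,
      (∀ m : Fin B × Fin B, ((∑ r, z r * v r m : ℤ) : ℚ) = β * cf (g j) (m.1.1, m.2.1)) ∧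
      ∀ m, ((|∑ r, z r * v r m| : ℤ) : ℝ) ≤ n.factorial * Real.exp h ^ n := by
    intro j
    have hj := gb_mem hg j
    have hb := hgB j _ (cf_lmon_ne hj.1)
    refine hz (fun m => cf (g j) (m.1.1, m.2.1)) ?_ (⟨_, hb.1⟩, ⟨_, hb.2⟩)
      ⟨g j, hj.2, hj.1, rfl⟩ ((lexMonic_iff _).1 (hg.2.1 j)) ?_
    · obtain ⟨q, hq, hgj⟩ := hgq j
      choose c hc using fun i => exists_mkP (hq i)
      refine ⟨fun r => c r.1 r.2, fun m => ?_⟩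
      rw [hcomb, ← comb_row, hgj]
      simp only [hc]
    · rintro m ⟨u, hu, hu0, hum⟩ hne
      change cf (g j) (m.1.1, m.2.1) = 0
      rw [← hum]
      apply gb_red hg j hu hu0
      intro he
      apply hne
      rw [hum] at he
      have e1 : m.1.1 = (lmon (g j)).1 := congrArg Prod.fst he
      have e2 : m.2.1 = (lmon (g j)).2 := congrArg Prod.snd he
      exact Prod.ext (Fin.ext e1) (Fin.ext e2)
  choose z hz1 hz2 using hex
  have hcf : ∀ j m, cf (∑ r, C (C (z j r)) * row f r) m = ∑ r, z j r * cf (row f r) m := by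
    intro j m
    rw [cf_sum]
    exact Finset.sum_congr rfl fun r _ => cf_CC _ _ _
  have hout : ∀ (m : ℕ × ℕ), ¬ (m.1 < B ∧ m.2 < B) →
      ∀ r : Fin t × Fin T × Fin T, cf (row f r) m = 0 := by
    intro m hm r
    by_contra h0
    apply hm
    apply row_mem_Box f hF r
    rw [cf_toQ]
    exact_mod_cast h0
  refine ⟨fun j => ∑ r, C (C (z j r)) * row f r, ?_, ?_, ?_⟩
  · intro j
    apply biv_ext
    intro m
    rw [cf_toQ, hcf, cf_CC]
    by_cases hm : m.1 < B ∧ m.2 < B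
    · exact hz1 j (⟨_, hm.1⟩, ⟨_, hm.2⟩)
    · have h1 : cf (g j) m = 0 := by
        by_contra h0
        exact hm (hgB j m h0)
      rw [h1, Finset.sum_eq_zero fun r _ => by rw [hout m hm r, mul_zero]]
      simp
  · intro j m
    rw [hcf]
    by_cases hm : m.1 < B ∧ m.2 < B
    · exact hz2 j (⟨_, hm.1⟩, ⟨_, hm.2⟩)
    · rw [Finset.sum_eq_zero fun r _ => by rw [hout m hm r, mul_zero]]
      simp only [abs_zero, Int.cast_zero]
      positivity
  · intro j
    refine Ideal.sum_mem _ fun r _ => ?_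
    refine Ideal.mul_mem_left _ _ ?_
    exact Ideal.mul_mem_left _ _ (Ideal.mul_mem_left _ _ (Ideal.subset_span ⟨r.1, rfl⟩))

/-- let `F = (f_1, …, f_t) ⊂ ℤ[x,y]` (`t ≥ 2`) generate a
zero-dimensional ideal `I ⊆ ℚ[x,y]`, with total degrees at most `d ≥ 1` and
coefficients of absolute value at most `e^h`. Let `G = (g_0, …, g_s)` be the reduced
minimal lexicographic Gröbner basis of `I` (for `x ≺ y`). Then there is a nonzero
integer `β` such that (a) all `β gⱼ` have integer coefficients, (b) `|β|` and all
coefficients of the `β gⱼ` are at most `exp (C(t,d,Δ₃(d),h))` in absolute value, and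
(c) for every prime `p ∤ β`, the images of the `gⱼ` in `F_p[x,y]` form the reduced
minimal lexicographic Gröbner basis of `⟨f_1 mod p, …, f_t mod p⟩`. -/
theorem height_bound_case3 {t s : ℕ} (ht : 2 ≤ t)
    (f : Fin t → Biv ℤ) (d : ℕ) (hd : 1 ≤ d) (h : ℝ)
    (htot : ∀ i, totDeg (f i) ≤ d)
    (hht : ∀ i (a b : ℕ), ((|((f i).coeff a).coeff b| : ℤ) : ℝ) ≤ Real.exp h)
    (I : Ideal (Biv ℚ)) (hI : I = Ideal.span (Set.range fun i => toQ (f i)))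
    (hdim : FiniteDimensional ℚ (Biv ℚ ⧸ I))
    (g : Fin (s + 1) → Biv ℚ) (hg : IsReducedGB g I) :
    ∃ β : ℤ, β ≠ 0 ∧
      ∃ gz : Fin (s + 1) → Biv ℤ,
        (∀ j, toQ (gz j) = Polynomial.C (Polynomial.C (β : ℚ)) * g j) ∧
        ((|β| : ℝ) ≤ Real.exp (Cfun t d (Delta3 d) h)) ∧
        (∀ j (a b : ℕ), ((|((gz j).coeff a).coeff b| : ℤ) : ℝ) ≤
          Real.exp (Cfun t d (Delta3 d) h)) ∧
        (∀ p : ℕ, p.Prime → ¬ ((p : ℤ) ∣ β) →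
          IsReducedGB
            (fun j => Polynomial.C (Polynomial.C ((β : ZMod p))⁻¹) * toP p (gz j))
            (Ideal.span (Set.range fun i => toP p (f i)))) := by
  have hF : ∀ i, toQ (f i) ∈ Box (d + 1) (d + 1) := fun i => totDeg_Box (htot i)
  obtain ⟨hr, hs⟩ := exists_r0 I hdim
  have hh : 0 ≤ h := by
    obtain ⟨r, hr0, hr⟩ := hr
    exact h_nonneg f h hht I hI _ hr (by simpa using hr0)
  obtain ⟨⟨R, hR, hRL, qR, hqR, heR⟩, ⟨S, hS, hSL, qS, hqS, heS⟩⟩ :=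
    elimRS' (fun i => toQ (f i)) hF (by rw [← hI]; exact hr) (by rw [← hI]; exact hs)
  have hsum : ∀ q : Fin t → Biv ℚ, ∑ i, q i * toQ (f i) ∈ I := by
    intro q
    rw [hI]
    exact Ideal.sum_mem _ fun i _ => Ideal.mul_mem_left _ _ (Ideal.subset_span ⟨i, rfl⟩)
  have hRI : (C R : Biv ℚ) ∈ I := by rw [← heR]; exact hsum qR
  have hSI : (S.map C : Biv ℚ) ∈ I := by rw [← heS]; exact hsum qS
  have hgL := gb_Box hg hR hS hRL hSL hRI hSI
  obtain ⟨n, β, hn, hβ, hβb, gz, hgz, hgzb, hmem⟩ := macaulay f h hF hht I hI g hg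
    (T := 2 * (2 * d ^ 2 + 1 + d) + d) (by omega) hgL (fun j =>
      bounded _ hF _ R S hR hS hRL hSL qR qS hqR hqS heR heS (g j)
        (by rw [← hI]; exact (gb_mem hg j).2) (hgL j))
  have hnum := numeric ht hd hh hn
  refine ⟨β, hβ, gz, hgz, ?_, ?_, ?_⟩
  · rw [← Int.cast_abs]
    exact hβb.trans hnum
  · intro j a b
    exact (hgzb j (a, b)).trans hnum
  · intro p hpp hp
    exact transfer f I hI g hg β gz hgz hmem p hpp hp
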